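/- arXiv:1912.03946 — 2 statements merged into one kernel-verified Lean document; each statement's English description precedes it below -/
import Mathlib

section
/- Let f, g : ℝ → ℝ with g concave and g ≥ f, and suppose x₀ ∈ ℝ satisfies g(x₀) = f^conc(x₀) where f^conc is the concave envelope of f, and f^conc(x₀) > f(x₀). Then there exist x¹ < x₀ < x² and θ ∈ (0,1) with x₀ = θ x¹ + (1−θ) x² and f^conc(x₀) = θ f^conc(x¹) + (1−θ) f^conc(x²). More generally, for any x₀ where f^conc(x₀) > f(x₀), f^conc is affine on a neighborhood of x₀ contained in {f^conc > f} (assuming f is continuous and f^conc is finite). -/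
theorem stmt17_key (f F : ℝ → ℝ)
    (hf : Continuous f)
    (hconc : ConcaveOn ℝ Set.univ F)
    (hge : ∀ x, f x ≤ F x)
    (hmin : ∀ h : ℝ → ℝ, ConcaveOn ℝ Set.univ h →
      (∀ x, f x ≤ h x) → ∀ x, F x ≤ h x) (x₀ : ℝ) (hx : f x₀ < F x₀) :
    ∃ δ > 0, ∃ a b : ℝ, ∀ x ∈ Set.Icc (x₀ - δ) (x₀ + δ), f x < F x ∧ F x = a * x + b := by
  have hFc : Continuous F := by
    rw [← continuousOn_univ]
    exact hconc.continuousOn isOpen_univ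
  obtain ⟨c, hc1, hc2⟩ := exists_between hx
  have h1 : ∀ᶠ x in nhds x₀, f x < c ∧ c < F x :=
    (hf.continuousAt.eventually_lt continuousAt_const hc1).and
      (continuousAt_const.eventually_lt hFc.continuousAt hc2)
  obtain ⟨δ, hδ, hb⟩ := (Metric.nhds_basis_closedBall.eventually_iff).1 h1
  rw [Real.closedBall_eq_Icc] at hb
  obtain ⟨p, hp⟩ : ∃ p, p = x₀ - δ := ⟨_, rfl⟩
  obtain ⟨q, hq⟩ : ∃ q, q = x₀ + δ := ⟨_, rfl⟩
  rw [← hp, ← hq] at hb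
  have hpq : p < q := by linarith
  have hpq' : 0 < q - p := by linarith
  have hcp := (hb (Set.left_mem_Icc.2 hpq.le)).2
  have hcq := (hb (Set.right_mem_Icc.2 hpq.le)).2
  obtain ⟨a, ha⟩ : ∃ a, a = (F q - F p) / (q - p) := ⟨_, rfl⟩
  have ha' : a * (q - p) = F q - F p := by rw [ha]; field_simp
  obtain ⟨b, hb'⟩ : ∃ b, b = F p - a * p := ⟨_, rfl⟩
  have hLp : a * p + b = F p := by linarith
  have hLq : a * q + b = F q := by linarith
  have hLc : ∀ x ∈ Set.Icc p q, c < a * x + b := by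
    rintro x ⟨hx1, hx2⟩
    rcases le_total 0 a with h | h
    · nlinarith
    · nlinarith
  have hLle : ∀ x ∈ Set.Icc p q, a * x + b ≤ F x := by
    rintro x ⟨hx1, hx2⟩
    rcases hx1.eq_or_lt with rfl | hx1
    · exact hLp.le
    rcases hx2.eq_or_lt with rfl | hx2
    · exact hLq.le
    have := hconc.slope_anti_adjacent (Set.mem_univ p) (Set.mem_univ q) hx1 hx2
    rw [div_le_div_iff₀ (by linarith) (by linarith)] at this
    have : 0 ≤ (q - p) * (F x - (a * x + b)) := by
      rw [← hLp, ← hLq] at this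
      nlinarith
    have := nonneg_of_mul_nonneg_right this hpq'
    linarith
  have hLge : ∀ x, x ∉ Set.Icc p q → F x ≤ a * x + b := by
    intro x hx
    by_cases h : x < p
    · have := hconc.slope_anti_adjacent (Set.mem_univ x) (Set.mem_univ q) h hpq
      rw [← ha, le_div_iff₀ (by linarith)] at this
      linarith
    · have h2 : q < x := by
        by_contra h3
        exact hx ⟨not_lt.1 h, not_lt.1 h3⟩
      have := hconc.slope_anti_adjacent (Set.mem_univ p) (Set.mem_univ x) hpq h2
      rw [← ha, div_le_iff₀ (by linarith)] at this
      linarith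
  have hL : ConcaveOn ℝ Set.univ (fun x : ℝ => a * x + b) := by
    refine ⟨convex_univ, ?_⟩
    intro x _ y _ s t _ _ hst
    simp only [smul_eq_mul]
    have : t = 1 - s := by linarith
    subst this
    apply le_of_eq
    ring
  have key := hmin _ (hconc.inf hL) (by
    intro x
    refine le_inf (hge x) ?_
    by_cases hx : x ∈ Set.Icc p q
    · exact ((hb hx).1.trans (hLc x hx)).le
    · exact (hge x).trans (hLge x hx))
  refine ⟨δ, hδ, a, b, ?_⟩
  rw [← hp, ← hq]
  intro x hx
  exact ⟨(hb hx).1.trans (hb hx).2, le_antisymm ((key x).trans inf_le_right) (hLle x hx)⟩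

/-- Structure of the concave envelope at points of strict domination: the
envelope value is a strict convex combination of envelope values on both
sides, and the envelope is locally affine on `{f^conc > f}`. -/
theorem stmt17 (f g fconc : ℝ → ℝ)
    (hf : Continuous f)
    (hconc : ConcaveOn ℝ Set.univ fconc)
    (hge : ∀ x, f x ≤ fconc x)
    (hmin : ∀ h : ℝ → ℝ, ConcaveOn ℝ Set.univ h →
      (∀ x, f x ≤ h x) → ∀ x, fconc x ≤ h x)
    (hg : ConcaveOn ℝ Set.univ g) (hgf : ∀ x, f x ≤ g x) :
    (∀ x₀ : ℝ, g x₀ = fconc x₀ → f x₀ < fconc x₀ →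
      ∃ x₁ x₂ θ : ℝ, x₁ < x₀ ∧ x₀ < x₂ ∧ θ ∈ Set.Ioo (0 : ℝ) 1 ∧
        x₀ = θ * x₁ + (1 - θ) * x₂ ∧
        fconc x₀ = θ * fconc x₁ + (1 - θ) * fconc x₂) ∧
    (∀ x₀ : ℝ, f x₀ < fconc x₀ →
      ∃ U ∈ nhds x₀, (∀ x ∈ U, f x < fconc x) ∧
        ∃ a b : ℝ, ∀ x ∈ U, fconc x = a * x + b) := by
  have key := stmt17_key f fconc hf hconc hge hmin
  constructor
  · intro x₀ _ hx
    obtain ⟨δ, hδ, a, b, h⟩ := key x₀ hx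
    refine ⟨x₀ - δ, x₀ + δ, 1 / 2, by linarith, by linarith, by norm_num, by ring, ?_⟩
    rw [(h x₀ ⟨by linarith, by linarith⟩).2, (h (x₀ - δ) ⟨by linarith, by linarith⟩).2,
      (h (x₀ + δ) ⟨by linarith, by linarith⟩).2]
    ring
  · intro x₀ hx
    obtain ⟨δ, hδ, a, b, h⟩ := key x₀ hx
    exact ⟨Set.Icc (x₀ - δ) (x₀ + δ), Icc_mem_nhds (by linarith) (by linarith),
      fun x hx => (h x hx).1, a, b, fun x hx => (h x hx).2⟩
end

section
/- Let (Ω, F, (F_t), P) be a filtered probability space and X a continuous (F_t)-martingale. Suppose v : [0,T] × ℝ → ℝ is continuous, x ↦ v(t,x) is concave for every t, t ↦ v(t,x) is non-increasing for every x, and ∂_x v exists, is continuous and bounded on [0,T] × ℝ. Then there exists a non-increasing predictable process K with K_0 = 0 such that v(t, X_t) = v(0, X_0) + ∫₀ᵗ ∂_x v(s, X_s) dX_s + K_t for all t ∈ [0,T], P-a.s. In particular, v(·, X) − ∫₀^· ∂_x v(s,X_s) dX_s is a supermartingale. -/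
open MeasureTheory Filter

noncomputable def burkU (x y : ℝ) : ℝ := if |x| + |y| ≤ 1 then y ^ 2 - x ^ 2 else 1 - 2 * |x|
noncomputable def burkA (x y : ℝ) : ℝ :=
  if |x| + |y| ≤ 1 then -2 * x else if 0 ≤ x then -2 else 2
noncomputable def burkB (x y : ℝ) : ℝ := if |x| + |y| ≤ 1 then 2 * y else 0

lemma burkA_bound (x y : ℝ) : |burkA x y| ≤ 2 := by
  unfold burkA
  split_ifs with h1 h2
  · rw [abs_mul]; norm_num; nlinarith [abs_nonneg x, abs_nonneg y]
  · norm_num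
  · norm_num

lemma burkB_bound (x y : ℝ) : |burkB x y| ≤ 2 := by
  unfold burkB
  split_ifs with h1
  · rw [abs_mul]; norm_num; nlinarith [abs_nonneg x, abs_nonneg y]
  · norm_num

lemma burk_measSet : MeasurableSet {p : ℝ × ℝ | |p.1| + |p.2| ≤ 1} :=
  (isClosed_le (by fun_prop) (by fun_prop)).measurableSet

lemma burkA_meas : Measurable fun p : ℝ × ℝ => burkA p.1 p.2 := by
  unfold burkA
  refine Measurable.ite burk_measSet (by fun_prop) (Measurable.ite ?_ (by fun_prop) (by fun_prop))
  exact (isClosed_le (by fun_prop) (by fun_prop)).measurableSet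

lemma burkB_meas : Measurable fun p : ℝ × ℝ => burkB p.1 p.2 := by
  unfold burkB
  exact Measurable.ite burk_measSet (by fun_prop) (by fun_prop)

lemma burkU_zero (x : ℝ) : burkU x 0 ≤ 0 := by
  unfold burkU
  split_ifs with h
  · nlinarith [sq_nonneg x]
  · simp at h; linarith

lemma burkU_ge (x y : ℝ) : -2 * |x| ≤ burkU x y := by
  unfold burkU
  split_ifs with h
  · nlinarith [sq_nonneg y, abs_nonneg x, abs_nonneg y, sq_abs x]
  · linarith

lemma burkU_ge_one (x y : ℝ) (hy : 1 ≤ |y|) : 1 - 2 * |x| ≤ burkU x y := by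
  unfold burkU
  split_ifs with h
  · nlinarith [sq_nonneg y, abs_nonneg x, abs_nonneg y, sq_abs x, sq_abs y]
  · linarith

lemma burk_step (x y h k : ℝ) (hk : |k| ≤ |h|) :
    burkU (x + h) (y + k) ≤ burkU x y + burkA x y * h + burkB x y * k := by
  unfold burkU burkA burkB
  by_cases h1 : |x| + |y| ≤ 1
  · simp only [h1, if_true]
    have hkk : k ^ 2 ≤ h ^ 2 := sq_le_sq.mpr hk
    split_ifs with h2
    · nlinarith
    · push Not at h2
      by_cases h3 : |x + h| ≤ 1
      · have : (1 - |x + h|) ^ 2 ≤ (y + k) ^ 2 := by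
          rw [← sq_abs (y + k)]
          exact pow_le_pow_left₀ (by linarith) (by linarith) 2
        nlinarith [sq_abs (x + h)]
      · push Not at h3
        have ha : |x + h| ≤ |x| + |h| := abs_add_le _ _
        have : (|x + h| - 1) ^ 2 ≤ (|h| - |y|) ^ 2 :=
          pow_le_pow_left₀ (by linarith) (by linarith) 2
        have hyk : -(|y| * |h|) ≤ y * k := by
          have := neg_abs_le (y * k)
          rw [abs_mul] at this
          nlinarith [abs_nonneg y]
        nlinarith [sq_abs (x + h), sq_abs h, sq_abs y]
  · simp only [h1, if_false]
    split_ifs with h2 h3 h3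
    · have h4 : (y + k) ^ 2 ≤ (1 - |x + h|) ^ 2 := by
        rw [← sq_abs (y + k)]
        exact pow_le_pow_left₀ (abs_nonneg _) (by linarith) 2
      rw [abs_of_nonneg h3]
      nlinarith [sq_abs (x + h), le_abs_self (x + h)]
    · have h4 : (y + k) ^ 2 ≤ (1 - |x + h|) ^ 2 := by
        rw [← sq_abs (y + k)]
        exact pow_le_pow_left₀ (abs_nonneg _) (by linarith) 2
      rw [abs_of_neg (not_le.mp h3)]
      nlinarith [sq_abs (x + h), neg_abs_le (x + h)]
    · rw [abs_of_nonneg h3]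
      linarith [le_abs_self (x + h)]
    · rw [abs_of_neg (not_le.mp h3)]
      linarith [neg_abs_le (x + h)]

lemma mart_orth {Ω : Type*} {m : MeasurableSpace Ω} (P : Measure Ω)
    [IsProbabilityMeasure P] (F : Filtration ℝ m)
    (X : ℝ → Ω → ℝ) (hX : Martingale X F P) (s t : ℝ) (hst : s ≤ t)
    (c : Ω → ℝ) (hc : Measurable[F s] c) (C : ℝ) (hC : ∀ ω, |c ω| ≤ C) :
    Integrable (fun ω => c ω * (X t ω - X s ω)) P ∧ ∫ ω, c ω * (X t ω - X s ω) ∂P = 0 := by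
  have hi : Integrable (X t - X s) P := (hX.integrable t).sub (hX.integrable s)
  have hcs : StronglyMeasurable[F s] c := hc.stronglyMeasurable
  have hint : Integrable (c * (X t - X s)) P :=
    hi.bdd_mul (c := C) (hcs.mono (F.le s)).aestronglyMeasurable (ae_of_all _ hC)
  refine ⟨hint, ?_⟩
  change ∫ ω, (c * (X t - X s)) ω ∂P = 0
  rw [← integral_condExp (F.le s)]
  have h1 : P[c * (X t - X s) | F s] =ᵐ[P] 0 := by
    have h2 := condExp_mul_of_stronglyMeasurable_left hcs hint hi
    have h3 := condExp_sub (hX.integrable t) (hX.integrable s) (F s)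
    have h4 := hX.2 s t hst
    have h5 := hX.2 s s le_rfl
    filter_upwards [h2, h3, h4, h5] with ω a1 a2 a3 a4
    simp [a1, a2, a3, a4]
  rw [integral_congr_ae h1]; simp

lemma weak_type {Ω : Type*} {m : MeasurableSpace Ω} (P : Measure Ω)
    [IsProbabilityMeasure P] (F : Filtration ℝ m)
    (X : ℝ → Ω → ℝ) (hX : Martingale X F P) (N : ℕ) (u : ℕ → ℝ)
    (hu : ∀ k < N, u k ≤ u (k + 1)) (a : ℕ → Ω → ℝ)
    (ha : ∀ k < N, Measurable[F (u k)] (a k)) (ε δ : ℝ) (hε : 0 < ε) (hδ : 0 < δ)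
    (hab : ∀ k < N, ∀ ω, |a k ω| ≤ ε) :
    P.real {ω | δ ≤ |∑ k ∈ Finset.range N, a k ω * (X (u (k + 1)) ω - X (u k) ω)|}
      ≤ 2 * (ε / δ) * ∫ ω, |X (u N) ω| ∂P := by
  set Y : ℕ → Ω → ℝ := fun n ω => ∑ k ∈ Finset.range n, a k ω * (X (u (k + 1)) ω - X (u k) ω)
    with hY
  have hXm : ∀ t, Measurable[F t] (X t) := fun t => (hX.1 t).measurable
  have hYm : ∀ n ≤ N, Measurable[F (u n)] (Y n) := by
    intro n
    induction n with
    | zero => intro _; simp only [hY, Finset.range_zero, Finset.sum_empty]; exact measurable_const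
    | succ n ih =>
      intro hn
      have hle : F (u n) ≤ F (u (n + 1)) := F.mono (hu n hn)
      simp only [hY, Finset.sum_range_succ]
      refine Measurable.add ((ih (by omega)).mono hle le_rfl) ?_
      exact ((ha n hn).mono hle le_rfl).mul ((hXm _).sub ((hXm _).mono hle le_rfl))
  set c : ℕ → Ω → ℝ := fun k ω =>
    burkA (ε / δ * X (u k) ω) (Y k ω / δ) * (ε / δ) + burkB (ε / δ * X (u k) ω) (Y k ω / δ) * (a k ω / δ)
    with hc
  have hcm : ∀ k < N, Measurable[F (u k)] (c k) := by
    intro k hk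
    have hp : Measurable[F (u k)] (fun ω => ((ε / δ * X (u k) ω, Y k ω / δ) : ℝ × ℝ)) :=
      Measurable.prodMk ((hXm _).const_mul _) ((hYm k hk.le).div_const _)
    exact ((burkA_meas.comp hp).mul_const _).add ((burkB_meas.comp hp).mul ((ha k hk).div_const _))
  have hcb : ∀ k < N, ∀ ω, |c k ω| ≤ 4 * (ε / δ) := by
    intro k hk ω
    have h1 := burkA_bound (ε / δ * X (u k) ω) (Y k ω / δ)
    have h2 := burkB_bound (ε / δ * X (u k) ω) (Y k ω / δ)
    have h3 : |a k ω / δ| ≤ ε / δ := by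
      rw [abs_div, abs_of_pos hδ]; gcongr; exact hab k hk ω
    have h4 : 0 < ε / δ := by positivity
    refine (abs_add_le _ _).trans ?_
    rw [abs_mul, abs_mul, abs_of_pos h4]
    nlinarith [abs_nonneg (a k ω / δ), abs_nonneg (burkB (ε / δ * X (u k) ω) (Y k ω / δ))]
  have hpath : ∀ ω, ∀ n ≤ N, burkU (ε / δ * X (u n) ω) (Y n ω / δ) ≤
      ∑ k ∈ Finset.range n, c k ω * (X (u (k + 1)) ω - X (u k) ω) := by
    intro ω n
    induction n with
    | zero => intro _; simpa [hY] using burkU_zero _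
    | succ n ih =>
      intro hn
      have h0 := ih (by omega)
      have h1 := burk_step (ε / δ * X (u n) ω) (Y n ω / δ)
        (ε / δ * (X (u (n + 1)) ω - X (u n) ω)) (a n ω / δ * (X (u (n + 1)) ω - X (u n) ω)) (by
          rw [abs_mul, abs_mul]
          refine mul_le_mul_of_nonneg_right ?_ (abs_nonneg _)
          rw [abs_div, abs_div, abs_of_pos hε]
          exact div_le_div_of_nonneg_right (hab n hn ω) (abs_nonneg _))
      have e1 : ε / δ * X (u n) ω + ε / δ * (X (u (n + 1)) ω - X (u n) ω)
        = ε / δ * X (u (n + 1)) ω := by ring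
      have e2 : Y n ω / δ + a n ω / δ * (X (u (n + 1)) ω - X (u n) ω) = Y (n + 1) ω / δ := by
        simp only [hY, Finset.sum_range_succ]; ring
      rw [e1, e2] at h1
      rw [Finset.sum_range_succ]
      refine h1.trans ?_
      simp only [hc]
      simp only [hc] at h0
      nlinarith
  have hint : ∀ k ∈ Finset.range N,
      Integrable (fun ω => c k ω * (X (u (k + 1)) ω - X (u k) ω)) P := fun k hk =>
    (mart_orth P F X hX _ _ (hu k (Finset.mem_range.mp hk)) _ (hcm k (Finset.mem_range.mp hk)) _
      (hcb k (Finset.mem_range.mp hk))).1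
  have hzero : ∫ ω, ∑ k ∈ Finset.range N, c k ω * (X (u (k + 1)) ω - X (u k) ω) ∂P = 0 := by
    rw [integral_finsetSum _ hint]
    exact Finset.sum_eq_zero fun k hk =>
      (mart_orth P F X hX _ _ (hu k (Finset.mem_range.mp hk)) _ (hcm k (Finset.mem_range.mp hk)) _
      (hcb k (Finset.mem_range.mp hk))).2
  have hS : MeasurableSet {ω | δ ≤ |Y N ω|} :=
    measurableSet_le measurable_const (((hYm N le_rfl).mono (F.le _) le_rfl).abs)
  rw [← integral_indicator_one hS]
  have hXi : Integrable (fun ω => 2 * (ε / δ) * |X (u N) ω|) P := (hX.integrable _).abs.const_mul _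
  calc ∫ ω, Set.indicator {ω | δ ≤ |Y N ω|} 1 ω ∂P
      ≤ ∫ ω, (2 * (ε / δ) * |X (u N) ω| +
          ∑ k ∈ Finset.range N, c k ω * (X (u (k + 1)) ω - X (u k) ω)) ∂P := by
        refine integral_mono ((integrable_const (1:ℝ)).indicator hS)
          (hXi.add (integrable_finsetSum _ hint)) ?_
        intro ω
        have h1 := hpath ω N le_rfl
        have h4 : 0 < ε / δ := by positivity
        have e : |ε / δ * X (u N) ω| = ε / δ * |X (u N) ω| := by rw [abs_mul, abs_of_pos h4]
        by_cases hω : δ ≤ |Y N ω|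
        · rw [Set.indicator_of_mem (show ω ∈ {ω | δ ≤ |Y N ω|} from hω)]
          have h2 := burkU_ge_one (ε / δ * X (u N) ω) (Y N ω / δ)
            (by rw [abs_div, abs_of_pos hδ]; exact (one_le_div hδ).mpr hω)
          rw [e] at h2
          simp only [Pi.one_apply]
          linarith
        · rw [Set.indicator_of_notMem (show ω ∉ {ω | δ ≤ |Y N ω|} from hω)]
          have h2 := burkU_ge (ε / δ * X (u N) ω) (Y N ω / δ)
          rw [e] at h2
          show (0:ℝ) ≤ _
          linarith
    _ = 2 * (ε / δ) * ∫ ω, |X (u N) ω| ∂P := by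
        rw [integral_add hXi (integrable_finsetSum _ hint), hzero, integral_const_mul, add_zero]

noncomputable def mergePt (p q : ℕ → ℝ) (J k : ℕ) : ℝ :=
  max (p (k / J)) (min (q (k % J)) (p (k / J + 1)))

open Classical in
noncomputable def mergeCf (p q : ℕ → ℝ) (J : ℕ) (h : ℝ → ℝ) (k : ℕ) : ℝ :=
  if q (k % J) < p (k / J + 1) ∧ p (k / J) < q (k % J + 1) then
    h (p (k / J)) - h (q (k % J)) else 0

lemma sum_range_mul_divmod (J : ℕ) (hJ : 0 < J) (f : ℕ → ℕ → ℝ) (N : ℕ) :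
    ∑ k ∈ Finset.range (N * J), f (k / J) (k % J) =
      ∑ i ∈ Finset.range N, ∑ j ∈ Finset.range J, f i j := by
  induction N with
  | zero => simp
  | succ n ih =>
    rw [Nat.succ_mul, Finset.sum_range_add, ih, Finset.sum_range_succ]
    congr 1
    refine Finset.sum_congr rfl fun j hj => ?_
    have hj := Finset.mem_range.mp hj
    have h1 : (n * J + j) / J = n := by
      rw [Nat.add_comm, Nat.add_mul_div_right _ _ hJ, Nat.div_eq_of_lt hj, zero_add]
    have h2 : (n * J + j) % J = j := by
      rw [Nat.add_comm, Nat.add_mul_mod_self_right, Nat.mod_eq_of_lt hj]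
    rw [h1, h2]

lemma mergePt_succ (p q : ℕ → ℝ) (hp : Monotone p) (hq : Monotone q) (N J : ℕ) (hJ : 0 < J)
    (h0 : p 0 = q 0) (h1 : p N = q J) (k : ℕ) (hk : k < N * J) :
    mergePt p q J (k + 1) = max (p (k / J)) (min (q (k % J + 1)) (p (k / J + 1))) := by
  have hi : k / J < N := (Nat.div_lt_iff_lt_mul hJ).mpr hk
  have hj : k % J < J := Nat.mod_lt _ hJ
  have hd := Nat.div_add_mod k J
  unfold mergePt
  by_cases h : k % J + 1 < J
  · have e1 : (k + 1) / J = k / J := by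
      apply Nat.div_eq_of_lt_le
      · rw [mul_comm]; omega
      · rw [Nat.succ_mul, mul_comm]; omega
    have e2 : (k + 1) % J = k % J + 1 := by
      have hd' := Nat.div_add_mod (k + 1) J
      rw [e1] at hd'; omega
    rw [e1, e2]
  · have hJ' : k % J + 1 = J := by omega
    have e1 : (k + 1) / J = k / J + 1 := by
      apply Nat.div_eq_of_lt_le
      · rw [Nat.succ_mul, mul_comm]; omega
      · rw [Nat.succ_mul, Nat.succ_mul, mul_comm]; omega
    have e2 : (k + 1) % J = 0 := by
      have hd' := Nat.div_add_mod (k + 1) J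
      rw [e1, Nat.mul_succ] at hd'; omega
    rw [e1, e2, hJ', ← h0, ← h1]
    have a1 : p 0 ≤ p (k / J + 1) := hp (Nat.zero_le _)
    have a2 : p (k / J + 1) ≤ p N := hp (by omega)
    have a3 : p (k / J) ≤ p (k / J + 1) := hp (by omega)
    rw [min_eq_right a2, max_eq_right a3]
    exact max_eq_left ((min_le_left _ _).trans a1)

lemma mergePt_mono (p q : ℕ → ℝ) (hp : Monotone p) (hq : Monotone q) (N J : ℕ) (hJ : 0 < J)
    (h0 : p 0 = q 0) (h1 : p N = q J) (k : ℕ) (hk : k < N * J) :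
    mergePt p q J k ≤ mergePt p q J (k + 1) := by
  rw [mergePt_succ p q hp hq N J hJ h0 h1 k hk]
  unfold mergePt
  have := hq (Nat.le_succ (k % J))
  exact max_le_max le_rfl (min_le_min this le_rfl)

lemma merge_sum (p q : ℕ → ℝ) (hp : Monotone p) (hq : Monotone q) (N J : ℕ) (hJ : 0 < J)
    (h0 : p 0 = q 0) (h1 : p N = q J) (g h : ℝ → ℝ) :
    ∑ i ∈ Finset.range N, h (p i) * (g (p (i + 1)) - g (p i)) -
      ∑ j ∈ Finset.range J, h (q j) * (g (q (j + 1)) - g (q j)) =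
    ∑ k ∈ Finset.range (N * J), mergeCf p q J h k *
      (g (mergePt p q J (k + 1)) - g (mergePt p q J k)) := by
  classical
  set c : ℕ → ℕ → ℝ := fun i j => max (p i) (min (q j) (p (i + 1))) with hc
  have hR : ∑ k ∈ Finset.range (N * J), mergeCf p q J h k *
      (g (mergePt p q J (k + 1)) - g (mergePt p q J k)) =
      ∑ k ∈ Finset.range (N * J), (fun i j => (h (p i) - h (q j)) *
        (g (c i (j + 1)) - g (c i j))) (k / J) (k % J) := by
    refine Finset.sum_congr rfl fun k hk => ?_
    rw [mergePt_succ p q hp hq N J hJ h0 h1 k (Finset.mem_range.mp hk)]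
    unfold mergeCf
    split_ifs with hcond
    · rfl
    · have : c (k / J) (k % J + 1) = c (k / J) (k % J) := by
        simp only [hc]
        have a1 : q (k % J) ≤ q (k % J + 1) := hq (Nat.le_succ _)
        have a2 : p (k / J) ≤ p (k / J + 1) := hp (Nat.le_succ _)
        rw [not_and_or, not_lt, not_lt] at hcond
        rcases hcond with hcond | hcond
        · rw [min_eq_right hcond, min_eq_right (hcond.trans a1)]
        · rw [max_eq_left ((min_le_left _ _).trans hcond),
            max_eq_left ((min_le_left _ _).trans (a1.trans hcond))]
      simp only [this, sub_self, mul_zero, zero_mul]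
  rw [hR, sum_range_mul_divmod J hJ (fun i j => (h (p i) - h (q j)) * (g (c i (j + 1)) - g (c i j)))]
  simp only [sub_mul, Finset.sum_sub_distrib]
  congr 1
  · refine Finset.sum_congr rfl fun i hi => ?_
    have hi := Finset.mem_range.mp hi
    rw [← Finset.mul_sum, Finset.sum_range_sub (fun j => g (c i j))]
    have a0 : p 0 ≤ p i := hp (by omega)
    have a2 : p (i + 1) ≤ p N := hp (by omega)
    have a3 : p i ≤ p (i + 1) := hp (by omega)
    have e1 : c i J = p (i + 1) := by
      simp only [hc, ← h1]; rw [min_eq_right a2, max_eq_right a3]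
    have e0 : c i 0 = p i := by
      simp only [hc, ← h0]; exact max_eq_left ((min_le_left _ _).trans a0)
    rw [e1, e0]
  · rw [Finset.sum_comm]
    refine Finset.sum_congr rfl fun j hj => ?_
    have hj := Finset.mem_range.mp hj
    rw [← Finset.mul_sum]
    congr 1
    have key : ∀ x, p 0 ≤ x → x ≤ p N →
        ∑ i ∈ Finset.range N, (g (max (p i) (min x (p (i + 1)))) - g (p i)) = g x - g (p 0) := by
      intro x hx0 hx1
      have : ∀ i, g (max (p i) (min x (p (i + 1)))) - g (p i) =
          g (min x (p (i + 1))) - g (min x (p i)) := by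
        intro i
        have a3 : p i ≤ p (i + 1) := hp (by omega)
        rcases le_total x (p i) with hx | hx
        · rw [min_eq_left hx, min_eq_left (hx.trans a3), max_eq_left hx]; simp
        · rw [min_eq_right hx, max_eq_right (le_min hx a3)]
      simp only [this]
      rw [Finset.sum_range_sub (fun i => g (min x (p i))), min_eq_left hx1, min_eq_right hx0]
    have b0 : q 0 ≤ q j := hq (by omega)
    have b1 : q j ≤ q (j + 1) := hq (by omega)
    have b2 : q (j + 1) ≤ q J := hq (by omega)
    have k1 := key (q (j + 1)) (by linarith) (by linarith)
    have k2 := key (q j) (by linarith) (by linarith)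
    have : ∀ i, g (c i (j + 1)) - g (c i j) =
      (g (max (p i) (min (q (j + 1)) (p (i + 1)))) - g (p i)) -
      (g (max (p i) (min (q j) (p (i + 1)))) - g (p i)) := by intro i; simp only [hc]; ring
    simp only [this]
    rw [Finset.sum_sub_distrib, k1, k2]; ring

lemma merge_tendsto {Ω : Type*} {m : MeasurableSpace Ω} (P : Measure Ω)
    [IsProbabilityMeasure P] (F : Filtration ℝ m)
    (X : ℝ → Ω → ℝ) (hX : Martingale X F P)
    (H : ℝ → Ω → ℝ) (hH : ∀ t, Measurable[F t] (H t)) (hHc : ∀ ω, Continuous fun t => H t ω)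
    (t : ℝ) (p q : ℕ → ℕ → ℝ) (N J : ℕ → ℕ) (hJ : ∀ n, 0 < J n)
    (hp : ∀ n, Monotone (p n)) (hq : ∀ n, Monotone (q n))
    (hp0 : ∀ n, p n 0 = 0) (hq0 : ∀ n, q n 0 = 0) (hpN : ∀ n, p n (N n) = t)
    (hqJ : ∀ n, q n (J n) = t) (d : ℕ → ℝ) (hd : Tendsto d atTop (nhds 0))
    (hpd : ∀ n i, p n (i + 1) ≤ p n i + d n) (hqd : ∀ n i, q n (i + 1) ≤ q n i + d n) :
    TendstoInMeasure P (fun n ω =>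
      ∑ i ∈ Finset.range (N n), H (p n i) ω * (X (p n (i + 1)) ω - X (p n i) ω) -
      ∑ j ∈ Finset.range (J n), H (q n j) ω * (X (q n (j + 1)) ω - X (q n j) ω))
      atTop (fun _ => 0) := by
  have hXm : ∀ t, Measurable[F t] (X t) := fun t => (hX.1 t).measurable
  have hH' : ∀ t, Measurable (H t) := fun t => (hH t).mono (F.le t) le_rfl
  have hX' : ∀ t, Measurable (X t) := fun t => (hXm t).mono (F.le t) le_rfl
  have h01 : ∀ n, p n 0 = q n 0 := fun n => by rw [hp0, hq0]
  have hNJ : ∀ n, p n (N n) = q n (J n) := fun n => by rw [hpN, hqJ]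
  have hrw : ∀ n ω, ∑ i ∈ Finset.range (N n), H (p n i) ω * (X (p n (i + 1)) ω - X (p n i) ω) -
      ∑ j ∈ Finset.range (J n), H (q n j) ω * (X (q n (j + 1)) ω - X (q n j) ω) =
      ∑ k ∈ Finset.range (N n * J n), mergeCf (p n) (q n) (J n) (fun r => H r ω) k *
      (X (mergePt (p n) (q n) (J n) (k + 1)) ω - X (mergePt (p n) (q n) (J n) k) ω) := fun n ω =>
    merge_sum (p n) (q n) (hp n) (hq n) (N n) (J n) (hJ n) (h01 n) (hNJ n)
      (fun r => X r ω) (fun r => H r ω)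
  simp only [hrw]
  clear hrw
  -- measurability of coefficients
  have hcm : ∀ n k, Measurable[F (mergePt (p n) (q n) (J n) k)]
      (fun ω => mergeCf (p n) (q n) (J n) (fun r => H r ω) k) := by
    intro n k
    unfold mergeCf
    split_ifs with hc
    · refine Measurable.sub ((hH _).mono (F.mono ?_) le_rfl) ((hH _).mono (F.mono ?_) le_rfl)
      · exact le_max_left _ _
      · exact (le_min le_rfl hc.1.le).trans (le_max_right _ _)
    · exact measurable_const
  -- smallness
  have hsmall : ∀ ω, ∀ ε > 0, ∀ᶠ n in atTop, ∀ k < N n * J n,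
      |mergeCf (p n) (q n) (J n) (fun r => H r ω) k| ≤ ε := by
    intro ω ε hε
    have huc : UniformContinuousOn (fun r => H r ω) (Set.Icc 0 t) :=
      isCompact_Icc.uniformContinuousOn_of_continuous (hHc ω).continuousOn
    rw [Metric.uniformContinuousOn_iff] at huc
    obtain ⟨η, hη, huc⟩ := huc ε hε
    filter_upwards [hd.eventually (gt_mem_nhds hη)] with n hn k hk
    unfold mergeCf
    split_ifs with hc
    · have hi : k / J n < N n := (Nat.div_lt_iff_lt_mul (hJ n)).mpr hk
      have hj : k % J n < J n := Nat.mod_lt _ (hJ n)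
      have := huc (p n (k / J n)) ⟨?_, ?_⟩ (q n (k % J n)) ⟨?_, ?_⟩ ?_
      · rw [Real.dist_eq] at this; exact this.le
      · rw [← hp0 n]; exact hp n (Nat.zero_le _)
      · rw [← hpN n]; exact hp n (by omega)
      · rw [← hq0 n]; exact hq n (by omega)
      · rw [← hqJ n]; exact hq n (by omega)
      · have a1 := hpd n (k / J n)
        have a2 := hqd n (k % J n)
        rw [Real.dist_eq, abs_lt]
        constructor <;> linarith [hc.1, hc.2]
    · simpa using hε.le
  set u : ℕ → ℕ → ℝ := fun n k => mergePt (p n) (q n) (J n) k with hu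
  set a : ℕ → ℕ → Ω → ℝ := fun n k ω => mergeCf (p n) (q n) (J n) (fun r => H r ω) k with ha
  have huN : ∀ n, u n (N n * J n) = t := by
    intro n
    simp only [hu, mergePt]
    rw [Nat.mul_div_cancel _ (hJ n), Nat.mul_mod_left, hpN, hq0]
    apply max_eq_left
    refine (min_le_left _ _).trans ?_
    rw [← hpN n, ← hp0 n]; exact hp n (by omega)
  change TendstoInMeasure P (fun n ω => ∑ k ∈ Finset.range (N n * J n), a n k ω *
      (X (u n (k + 1)) ω - X (u n k) ω)) atTop (fun _ => 0)
  have ham : ∀ n k, Measurable (a n k) := fun n k => (hcm n k).mono (F.le _) le_rfl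
  set E := ∫ ω, |X t ω| ∂P with hE
  have hE0 : 0 ≤ E := integral_nonneg fun _ => abs_nonneg _
  -- truncation
  let tr : ℝ → ℝ → ℝ := fun ε x => max (-ε) (min x ε)
  have htrm : ∀ ε, Measurable (tr ε) := fun ε => by fun_prop
  rw [tendstoInMeasure_iff_measureReal_norm]
  intro δ hδ
  rw [Metric.tendsto_atTop]
  intro η hη
  obtain ⟨ε, hε, hεE⟩ : ∃ ε > 0, 2 * (ε / (δ / 2)) * E < η / 2 := by
    refine ⟨η * δ / (16 * (E + 1)), by positivity, ?_⟩
    have : 2 * (η * δ / (16 * (E + 1)) / (δ / 2)) * E = (η / 4) * (E / (E + 1)) := by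
      field_simp; ring
    rw [this]
    have : E / (E + 1) ≤ 1 := by rw [div_le_one (by positivity)]; linarith
    nlinarith
  have hT : TendstoInMeasure P (fun n ω => ∑ k ∈ Finset.range (N n * J n),
      (a n k ω - tr ε (a n k ω)) * (X (u n (k + 1)) ω - X (u n k) ω)) atTop (fun _ => 0) := by
    refine tendstoInMeasure_of_tendsto_ae (fun n => ?_) (ae_of_all _ fun ω => ?_)
    · refine (Finset.measurable_sum _ fun k _ => ?_).aestronglyMeasurable
      exact ((ham n k).sub ((htrm ε).comp (ham n k))).mul ((hX' _).sub (hX' _))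
    · refine tendsto_const_nhds.congr' ?_
      filter_upwards [hsmall ω ε hε] with n hn
      symm
      refine Finset.sum_eq_zero fun k hk => ?_
      have := abs_le.mp (hn k (Finset.mem_range.mp hk))
      have e : tr ε (a n k ω) = a n k ω := by
        simp only [tr]; rw [min_eq_left this.2, max_eq_right this.1]
      rw [e, sub_self, zero_mul]
  rw [tendstoInMeasure_iff_measureReal_norm] at hT
  obtain ⟨n0, hn0⟩ := Metric.tendsto_atTop.mp (hT (δ / 2) (by positivity)) (η / 2) (by positivity)
  refine ⟨n0, fun n hn => ?_⟩
  have h1 := hn0 n hn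
  rw [Real.dist_eq, sub_zero, abs_of_nonneg measureReal_nonneg] at h1 ⊢
  have h2 := weak_type P F X hX (N n * J n) (u n)
    (fun k hk => mergePt_mono (p n) (q n) (hp n) (hq n) (N n) (J n) (hJ n) (h01 n) (hNJ n) k hk)
    (fun k ω => tr ε (a n k ω)) (fun k _ => (htrm ε).comp (hcm n k)) ε (δ / 2) hε (by positivity)
    (fun k _ ω => abs_le.mpr ⟨le_max_left _ _, max_le (by linarith) (min_le_right _ _)⟩)
  rw [huN] at h2
  refine lt_of_le_of_lt (b := P.real ({ω | δ / 2 ≤ ‖∑ k ∈ Finset.range (N n * J n),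
      (a n k ω - tr ε (a n k ω)) * (X (u n (k + 1)) ω - X (u n k) ω) - 0‖} ∪
      {ω | δ / 2 ≤ |∑ k ∈ Finset.range (N n * J n), tr ε (a n k ω) *
        (X (u n (k + 1)) ω - X (u n k) ω)|})) ?_ ?_
  · refine measureReal_mono ?_
    intro ω hω
    by_contra hcon
    simp only [Set.mem_union, Set.mem_ofPred_eq, not_or, not_le, sub_zero, Real.norm_eq_abs] at hcon hω
    have e : ∑ k ∈ Finset.range (N n * J n), a n k ω * (X (u n (k + 1)) ω - X (u n k) ω) =
      ∑ k ∈ Finset.range (N n * J n),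
      (a n k ω - tr ε (a n k ω)) * (X (u n (k + 1)) ω - X (u n k) ω) +
      ∑ k ∈ Finset.range (N n * J n), tr ε (a n k ω) *
        (X (u n (k + 1)) ω - X (u n k) ω) := by
      rw [← Finset.sum_add_distrib]; exact Finset.sum_congr rfl fun k _ => by ring
    rw [e] at hω
    have := abs_add_le (∑ k ∈ Finset.range (N n * J n),
      (a n k ω - tr ε (a n k ω)) * (X (u n (k + 1)) ω - X (u n k) ω))
      (∑ k ∈ Finset.range (N n * J n), tr ε (a n k ω) *
        (X (u n (k + 1)) ω - X (u n k) ω))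
    linarith [hcon.1, hcon.2]
  · refine (measureReal_union_le _ _).trans_lt ?_
    linarith

lemma tangent_le {f : ℝ → ℝ} (hf : ConcaveOn ℝ Set.univ f) {x f' : ℝ} (hd : HasDerivAt f f' x)
    (y : ℝ) : f y ≤ f x + f' * (y - x) := by
  rcases lt_trichotomy x y with h | h | h
  · have := hf.slope_le_of_hasDerivAt (Set.mem_univ x) (Set.mem_univ y) h hd
    rw [slope_def_field, div_le_iff₀ (by linarith)] at this
    linarith
  · subst h; simp
  · have := hf.le_slope_of_hasDerivAt (Set.mem_univ y) (Set.mem_univ x) h hd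
    rw [slope_def_field, le_div_iff₀ (by linarith)] at this
    linarith

lemma increment_le {Ω : Type*} {m : MeasurableSpace Ω} (P : Measure Ω)
    [IsProbabilityMeasure P] (F : Filtration ℝ m)
    (T : ℝ)
    (X : ℝ → Ω → ℝ) (hX : Martingale X F P)
    (hXc : ∀ ω, Continuous fun t => X t ω)
    (v : ℝ → ℝ → ℝ)
    (hvconc : ∀ t, ConcaveOn ℝ Set.univ (v t))
    (hvmono : ∀ x : ℝ, AntitoneOn (fun t => v t x) (Set.Icc 0 T))
    (vx : ℝ → ℝ → ℝ)
    (hvx : ∀ t x, HasDerivAt (v t) (vx t x) x)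
    (hvxc : Continuous fun p : ℝ × ℝ => vx p.1 p.2)
    (I : ℝ → Ω → ℝ)
    (hI : ∀ t ∈ Set.Icc (0 : ℝ) T,
      TendstoInMeasure P
        (fun n : ℕ => fun ω => ∑ i ∈ Finset.range n,
          vx (t * i / n) (X (t * i / n) ω) *
            (X (t * (i + 1) / n) ω - X (t * i / n) ω))
        atTop (I t)) (s t : ℝ) (hs : 0 ≤ s) (hst : s ≤ t) (htT : t ≤ T) :
    ∀ᵐ ω ∂P, v t (X t ω) - v s (X s ω) ≤ I t ω - I s ω := by
  set H : ℝ → Ω → ℝ := fun r ω => vx r (X r ω) with hHdef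
  have hXm : ∀ t, Measurable[F t] (X t) := fun t => (hX.1 t).measurable
  have hH : ∀ r, Measurable[F r] (H r) := fun r =>
    (hvxc.comp (Continuous.prodMk_right r)).measurable.comp (hXm r)
  have hHc : ∀ ω, Continuous fun r => H r ω := fun ω =>
    hvxc.comp (continuous_id.prodMk (hXc ω))
  let p : ℕ → ℕ → ℝ := fun n i => t * i / ((n + 1 : ℕ) : ℝ)
  let q : ℕ → ℕ → ℝ := fun n j => s * ((min j (n + 1) : ℕ) : ℝ) / ((n + 1 : ℕ) : ℝ) +
    (t - s) * ((j - (n + 1) : ℕ) : ℝ) / ((n + 1 : ℕ) : ℝ)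
  have hM : ∀ n : ℕ, (0 : ℝ) < ((n + 1 : ℕ) : ℝ) := fun n => by positivity
  have ht : 0 ≤ t := hs.trans hst
  have hts : 0 ≤ t - s := by linarith
  have ql : ∀ n j, j ≤ n + 1 → q n j = s * j / ((n + 1 : ℕ) : ℝ) := by
    intro n j hj
    simp only [q]
    rw [min_eq_left hj, Nat.sub_eq_zero_of_le hj]; simp
  have qr : ∀ n j, q n (n + 1 + j) = s + (t - s) * j / ((n + 1 : ℕ) : ℝ) := by
    intro n j
    simp only [q]
    rw [min_eq_right (by omega), Nat.add_sub_cancel_left, mul_div_assoc, div_self (hM n).ne', mul_one]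
  have hd : Tendsto (fun n : ℕ => t / ((n + 1 : ℕ) : ℝ)) atTop (nhds 0) := by
    have := (tendsto_const_div_atTop_nhds_zero_nat t).comp (tendsto_add_atTop_nat 1)
    exact this
  have hmerge := merge_tendsto P F X hX H hH hHc t p q (fun n => n + 1) (fun n => n + 1 + (n + 1))
    (fun n => by omega)
    (fun n i j hij => by simp only [p]; gcongr)
    (fun n i j hij => by
      simp only [q]
      gcongr)
    (fun n => by simp [p]) (fun n => by rw [ql n 0 (Nat.zero_le _)]; simp)
    (fun n => by simp only [p]; field_simp)
    (fun n => by rw [qr]; field_simp; ring)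
    (fun n => t / ((n + 1 : ℕ) : ℝ)) hd
    (fun n i => by simp only [p]; push_cast; apply le_of_eq; ring)
    (fun n j => by
      rcases Nat.lt_or_ge j (n + 1) with hj | hj
      · rw [ql n j hj.le, ql n (j + 1) hj, ← add_div]
        apply div_le_div_of_nonneg_right _ (hM n).le
        push_cast; linarith
      · obtain ⟨k, rfl⟩ := Nat.exists_eq_add_of_le hj
        rw [qr, add_assoc, qr, add_assoc, ← add_div]
        gcongr
        push_cast; linarith)
  have hIt := (hI t ⟨ht, htT⟩).comp (tendsto_add_atTop_nat 1)
  have hIs := (hI s ⟨hs, hst.trans htT⟩).comp (tendsto_add_atTop_nat 1)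
  obtain ⟨n1, hn1, h1⟩ := hIt.exists_seq_tendsto_ae
  obtain ⟨n2, hn2, h2⟩ := (hIs.comp hn1.tendsto_atTop).exists_seq_tendsto_ae
  obtain ⟨n3, hn3, h3⟩ := (hmerge.comp (hn1.comp hn2).tendsto_atTop).exists_seq_tendsto_ae
  filter_upwards [h1, h2, h3] with ω a1 a2 a3
  have b1 := (a1.comp hn2.tendsto_atTop).comp hn3.tendsto_atTop
  have b2 := a2.comp hn3.tendsto_atTop
  have b := (b1.sub b2).sub a3
  rw [sub_zero] at b
  refine ge_of_tendsto' b fun l => ?_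
  simp only [Function.comp_apply]
  generalize n1 (n2 (n3 l)) = n
  have e1 : ∑ i ∈ Finset.range (n + 1), H (p n i) ω * (X (p n (i + 1)) ω - X (p n i) ω) =
      ∑ i ∈ Finset.range (n + 1),
          vx (t * i / ((n + 1 : ℕ) : ℝ)) (X (t * i / ((n + 1 : ℕ) : ℝ)) ω) *
            (X (t * (i + 1) / ((n + 1 : ℕ) : ℝ)) ω - X (t * i / ((n + 1 : ℕ) : ℝ)) ω) := by
    refine Finset.sum_congr rfl fun i _ => ?_
    have : p n (i + 1) = t * (i + 1) / ((n + 1 : ℕ) : ℝ) := by simp only [p]; push_cast; rfl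
    rw [this]
  have e2 : ∑ j ∈ Finset.range (n + 1 + (n + 1)), H (q n j) ω * (X (q n (j + 1)) ω - X (q n j) ω) =
      ∑ i ∈ Finset.range (n + 1),
          vx (s * i / ((n + 1 : ℕ) : ℝ)) (X (s * i / ((n + 1 : ℕ) : ℝ)) ω) *
            (X (s * (i + 1) / ((n + 1 : ℕ) : ℝ)) ω - X (s * i / ((n + 1 : ℕ) : ℝ)) ω) +
      ∑ j ∈ Finset.range (n + 1), H (q n (n + 1 + j)) ω *
        (X (q n (n + 1 + (j + 1))) ω - X (q n (n + 1 + j)) ω) := by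
    rw [Finset.sum_range_add]
    congr 1
    refine Finset.sum_congr rfl fun i hi => ?_
    have hi := Finset.mem_range.mp hi
    rw [ql n i hi.le, ql n (i + 1) hi]
    push_cast; rfl
  have e3 : v t (X t ω) - v s (X s ω) ≤ ∑ j ∈ Finset.range (n + 1), H (q n (n + 1 + j)) ω *
        (X (q n (n + 1 + (j + 1))) ω - X (q n (n + 1 + j)) ω) := by
    have f0 : q n (n + 1 + 0) = s := by rw [qr]; simp
    have f1 : q n (n + 1 + (n + 1)) = t := by rw [qr]; field_simp; ring
    calc v t (X t ω) - v s (X s ω) = ∑ j ∈ Finset.range (n + 1),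
          (v (q n (n + 1 + (j + 1))) (X (q n (n + 1 + (j + 1))) ω) -
            v (q n (n + 1 + j)) (X (q n (n + 1 + j)) ω)) := by
          rw [Finset.sum_range_sub (fun j => v (q n (n + 1 + j)) (X (q n (n + 1 + j)) ω)), f0, f1]
      _ ≤ _ := by
          refine Finset.sum_le_sum fun j hj => ?_
          have hj := Finset.mem_range.mp hj
          have hq0 : ∀ k, 0 ≤ q n (n + 1 + k) := by
            intro k; rw [qr]; have := hM n; positivity
          have hqT : ∀ k ≤ n + 1, q n (n + 1 + k) ≤ T := by
            intro k hk
            refine le_trans ?_ (f1.le.trans htT)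
            rw [qr, qr]; gcongr
          have hle : q n (n + 1 + j) ≤ q n (n + 1 + (j + 1)) := by
            rw [qr, qr]; gcongr; omega
          have g1 := hvmono (X (q n (n + 1 + (j + 1))) ω) ⟨hq0 j, hqT j (by omega)⟩
            ⟨hq0 (j + 1), hqT (j + 1) (by omega)⟩ hle
          have g2 := tangent_le (hvconc (q n (n + 1 + j))) (hvx _ (X (q n (n + 1 + j)) ω))
            (X (q n (n + 1 + (j + 1))) ω)
          simp only [hHdef]
          simp only at g1
          linarith
  rw [e1, e2]
  linarith

/-- Markovian Itô–Tanaka formula for a `C^{0,1}` function `v(t,x)` that is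
concave in `x` and non-increasing in `t`, along a continuous martingale `X`:
`v(t,X_t) = v(0,X_0) + ∫₀ᵗ ∂ₓv(s,X_s) dX_s + K_t` for a non-increasing adapted
process `K` with `K_0 = 0`; in particular `v(·,X) − ∫ ∂ₓv dX` is a
supermartingale on `[0,T]`. The stochastic integral `I` is characterized as
the limit in measure of Riemann sums along uniform partitions. -/
theorem stmt18 {Ω : Type*} {m : MeasurableSpace Ω} (ℙ : Measure Ω)
    [IsProbabilityMeasure ℙ] (ℱ : Filtration ℝ m)
    (T : ℝ) (hT : 0 < T)
    (X : ℝ → Ω → ℝ) (hX : Martingale X ℱ ℙ)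
    (hXc : ∀ ω, Continuous fun t => X t ω)
    (v : ℝ → ℝ → ℝ) (hv : Continuous fun p : ℝ × ℝ => v p.1 p.2)
    (hvconc : ∀ t, ConcaveOn ℝ Set.univ (v t))
    (hvmono : ∀ x : ℝ, AntitoneOn (fun t => v t x) (Set.Icc 0 T))
    (vx : ℝ → ℝ → ℝ)
    (hvx : ∀ t x, HasDerivAt (v t) (vx t x) x)
    (hvxc : Continuous fun p : ℝ × ℝ => vx p.1 p.2)
    (Cb : ℝ) (hvxb : ∀ t x, |vx t x| ≤ Cb)
    (I : ℝ → Ω → ℝ) (hIadapted : Adapted ℱ I)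
    (hIint : ∀ t, Integrable (I t) ℙ)
    (hI : ∀ t ∈ Set.Icc (0 : ℝ) T,
      TendstoInMeasure ℙ
        (fun n : ℕ => fun ω => ∑ i ∈ Finset.range n,
          vx (t * i / n) (X (t * i / n) ω) *
            (X (t * (i + 1) / n) ω - X (t * i / n) ω))
        atTop (I t)) :
    ∃ K : ℝ → Ω → ℝ, Adapted ℱ K ∧
      (∀ᵐ ω ∂ℙ, K 0 ω = 0 ∧ AntitoneOn (fun t => K t ω) (Set.Icc 0 T)) ∧
      (∀ t ∈ Set.Icc (0 : ℝ) T, ∀ᵐ ω ∂ℙ,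
        v t (X t ω) = v 0 (X 0 ω) + I t ω + K t ω) ∧
      (∀ s ∈ Set.Icc (0 : ℝ) T, ∀ t ∈ Set.Icc (0 : ℝ) T, s ≤ t →
        (ℙ[fun ω => v t (X t ω) - I t ω|ℱ s]) ≤ᵐ[ℙ]
          fun ω => v s (X s ω) - I s ω) := by
  
  classical
  have hXm : ∀ t, Measurable[ℱ t] (X t) := fun t => (hX.1 t).measurable
  have hvm : ∀ t, Measurable (v t) := fun t => (hv.comp (Continuous.prodMk_right t)).measurable
  have hinc := increment_le ℙ ℱ T X hX hXc v hvconc hvmono vx hvx hvxc I hI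
  -- integrability of `v t (X t)`
  have hvint : ∀ t, Integrable (fun ω => v t (X t ω)) ℙ := by
    intro t
    refine Integrable.mono' (g := fun ω => |v t 0| + Cb * |X t ω|)
      ((integrable_const _).add ((hX.integrable t).abs.const_mul _))
      (((hvm t).comp ((hXm t).mono (ℱ.le t) le_rfl)).aestronglyMeasurable)
      (ae_of_all _ fun ω => ?_)
    have h1 := tangent_le (hvconc t) (hvx t 0) (X t ω)
    have h2 := tangent_le (hvconc t) (hvx t (X t ω)) 0
    have h3 : ∀ y, |vx t y * X t ω| ≤ Cb * |X t ω| := fun y => by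
      rw [abs_mul]; exact mul_le_mul_of_nonneg_right (hvxb t y) (abs_nonneg _)
    have h4 := abs_le.mp (h3 0)
    have h5 := abs_le.mp (h3 (X t ω))
    have h6 := abs_le.mp (le_refl |v t 0|)
    rw [Real.norm_eq_abs, abs_le]
    constructor <;> linarith [h4.1, h4.2, h5.1, h5.2, h6.1, h6.2]
  set D : ℝ → Ω → ℝ := fun t ω => v t (X t ω) - v 0 (X 0 ω) - I t ω with hD
  have hDint : ∀ t, Integrable (D t) ℙ := fun t => ((hvint t).sub (hvint 0)).sub (hIint t)
  have hDm : ∀ t, 0 ≤ t → Measurable[ℱ t] (D t) := fun t ht =>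
    (((hvm t).comp (hXm t)).sub ((hvm 0).comp ((hXm 0).mono (ℱ.mono ht) le_rfl))).sub (hIadapted t)
  have hDle : ∀ s t, 0 ≤ s → s ≤ t → t ≤ T → ∀ᵐ ω ∂ℙ, D t ω ≤ D s ω := by
    intro s t h0 h1 h2
    filter_upwards [hinc s t h0 h1 h2] with ω h
    simp only [hD]; linarith
  have hD0 : ∀ᵐ ω ∂ℙ, D 0 ω = 0 := by
    have h1 := hI 0 ⟨le_rfl, hT.le⟩
    have h2 : TendstoInMeasure ℙ (fun (_ : ℕ) (_ : Ω) => (0 : ℝ)) atTop (I 0) := by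
      simpa using h1
    obtain ⟨ns, -, h3⟩ := h2.exists_seq_tendsto_ae
    filter_upwards [h3] with ω h
    have := tendsto_nhds_unique h tendsto_const_nhds
    simp only [hD]; rw [this]; ring
  set e : ℝ → ℝ := fun t => ∫ ω, D t ω ∂ℙ with he
  have hemono : AntitoneOn e (Set.Icc 0 T) := fun s hs t ht hst =>
    integral_mono_ae (hDint t) (hDint s) (hDle s t hs.1 hst ht.2)
  set S : Set ℝ := ({0, T} ∪ {x ∈ Set.Icc 0 T | ¬ContinuousWithinAt e (Set.Icc 0 T) x}) ∪
    (Set.range ((↑) : ℚ → ℝ) ∩ Set.Icc 0 T) with hS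
  have hSc : S.Countable :=
    (((Set.countable_singleton T).insert 0).union hemono.countable_not_continuousWithinAt).union
      ((Set.countable_range _).mono Set.inter_subset_left)
  have hSsub : S ⊆ Set.Icc 0 T := by
    rintro x ((hx | hx) | hx)
    · rcases hx with rfl | hx
      · exact ⟨le_rfl, hT.le⟩
      · rw [Set.mem_singleton_iff] at hx; subst hx; exact ⟨hT.le, le_rfl⟩
    · exact hx.1
    · exact hx.2
  have h0S : (0 : ℝ) ∈ S := Or.inl (Or.inl (Or.inl rfl))
  have hTS : T ∈ S := Or.inl (Or.inl (Or.inr rfl))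
  -- simultaneous monotonicity on `S`
  have hmonoS : ∀ᵐ ω ∂ℙ, ∀ x ∈ S, ∀ y ∈ S, x ≤ y → D y ω ≤ D x ω := by
    rw [ae_ball_iff hSc]
    intro x hx
    rw [ae_ball_iff hSc]
    intro y hy
    by_cases hxy : x ≤ y
    · filter_upwards [hDle x y (hSsub hx).1 hxy (hSsub hy).2] with ω h _ using h
    · exact ae_of_all _ fun ω h => absurd h hxy
  let K : ℝ → Ω → ℝ := fun t ω =>
    if t ∈ Set.Icc 0 T then ⨅ x : {x : ℝ // x ∈ S ∧ x ≤ t}, D x.1 ω else 0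
  have hKm : ∀ t, Measurable[ℱ t] (K t) := by
    intro t
    by_cases ht : t ∈ Set.Icc 0 T
    · have : K t = fun ω => ⨅ x : {x : ℝ // x ∈ S ∧ x ≤ t}, D x.1 ω := by
        funext ω; simp only [K]; rw [if_pos ht]
      rw [this]
      have : Countable {x : ℝ // x ∈ S ∧ x ≤ t} :=
        (hSc.mono (fun x (hx : x ∈ S ∧ x ≤ t) => hx.1)).to_subtype
      exact Measurable.iInf fun x =>
        (hDm x.1 (hSsub x.2.1).1).mono (ℱ.mono x.2.2) le_rfl
    · have : K t = fun ω => 0 := by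
        funext ω; simp only [K]; rw [if_neg ht]
      rw [this]; exact measurable_const
  have hbdd : ∀ ω, (∀ x ∈ S, ∀ y ∈ S, x ≤ y → D y ω ≤ D x ω) → ∀ t,
      BddBelow (Set.range fun x : {x : ℝ // x ∈ S ∧ x ≤ t} => D x.1 ω) := by
    intro ω hω t
    refine ⟨D T ω, ?_⟩
    rintro _ ⟨x, rfl⟩
    exact hω x.1 x.2.1 T hTS (hSsub x.2.1).2
  have hne : ∀ t ∈ Set.Icc 0 T, Nonempty {x : ℝ // x ∈ S ∧ x ≤ t} := fun t ht => ⟨⟨0, h0S, ht.1⟩⟩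
  have hKS : ∀ ω, (∀ x ∈ S, ∀ y ∈ S, x ≤ y → D y ω ≤ D x ω) → ∀ t ∈ S, K t ω = D t ω := by
    intro ω hω t ht
    have htI := hSsub ht
    have := hne t htI
    simp only [K]; rw [if_pos htI]
    apply le_antisymm
    · exact ciInf_le (hbdd ω hω t) ⟨t, ht, le_rfl⟩
    · exact le_ciInf fun x => hω x.1 x.2.1 t ht x.2.2
  have hKle : ∀ ω, (∀ x ∈ S, ∀ y ∈ S, x ≤ y → D y ω ≤ D x ω) → ∀ t ∈ Set.Icc 0 T,
      ∀ x ∈ S, x ≤ t → K t ω ≤ D x ω := by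
    intro ω hω t ht x hx hxt
    simp only [K]; rw [if_pos ht]
    exact ciInf_le (hbdd ω hω t) ⟨x, hx, hxt⟩
  have hKD : ∀ t ∈ Set.Icc (0 : ℝ) T, ∀ᵐ ω ∂ℙ, K t ω = D t ω := by
    intro t ht
    by_cases htS : t ∈ S
    · filter_upwards [hmonoS] with ω hω using hKS ω hω t htS
    have hcont : ContinuousWithinAt e (Set.Icc 0 T) t := by
      by_contra hcon
      exact htS (Or.inl (Or.inr ⟨ht, hcon⟩))
    have ht0 : 0 < t := lt_of_le_of_ne ht.1 fun h => htS (h ▸ h0S)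
    have hge : ∀ᵐ ω ∂ℙ, D t ω ≤ K t ω := by
      have : ∀ᵐ ω ∂ℙ, ∀ x ∈ S, x ≤ t → D t ω ≤ D x ω := by
        rw [ae_ball_iff hSc]
        intro x hx
        by_cases hxt : x ≤ t
        · filter_upwards [hDle x t (hSsub hx).1 hxt ht.2] with ω h _ using h
        · exact ae_of_all _ fun ω h => absurd h hxt
      filter_upwards [this] with ω hω
      have := hne t ht
      simp only [K]; rw [if_pos ht]
      exact le_ciInf fun x => hω x.1 x.2.1 x.2.2
    have hKint : Integrable (fun ω => K t ω - D t ω) ℙ := by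
      refine Integrable.mono' (g := fun ω => D 0 ω - D t ω) ((hDint 0).sub (hDint t)) ?_ ?_
      · exact (((hKm t).sub (hDm t ht.1)).mono (ℱ.le t) le_rfl).aestronglyMeasurable
      · filter_upwards [hge, hmonoS] with ω h1 h2
        rw [Real.norm_eq_abs, abs_of_nonneg (by linarith)]
        linarith [hKle ω h2 t ht 0 h0S ht.1]
    have hnn : 0 ≤ᵐ[ℙ] fun ω => K t ω - D t ω := by
      filter_upwards [hge] with ω h
      simpa using h
    have hz : ∫ ω, (K t ω - D t ω) ∂ℙ = 0 := by
      apply le_antisymm _ (integral_nonneg_of_ae hnn)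
      refine le_of_forall_pos_le_add fun ε hε => ?_
      rw [Metric.continuousWithinAt_iff] at hcont
      obtain ⟨η, hη, hc⟩ := hcont ε hε
      obtain ⟨r, hr1, hr2⟩ := exists_rat_btwn (show max 0 (t - η) < t from
        max_lt ht0 (by linarith))
      have hr0 : 0 < (r : ℝ) := (le_max_left _ _).trans_lt hr1
      have hr3 : t - η < r := (le_max_right _ _).trans_lt hr1
      have hrI : (r : ℝ) ∈ Set.Icc 0 T := ⟨hr0.le, hr2.le.trans ht.2⟩
      have hrS : (r : ℝ) ∈ S := Or.inr ⟨⟨r, rfl⟩, hrI⟩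
      have h1 := hc hrI (by rw [Real.dist_eq, abs_lt]; constructor <;> linarith)
      rw [Real.dist_eq] at h1
      have h2 : ∫ ω, (K t ω - D t ω) ∂ℙ ≤ ∫ ω, (D r ω - D t ω) ∂ℙ := by
        refine integral_mono_ae hKint ((hDint r).sub (hDint t)) ?_
        filter_upwards [hmonoS] with ω h
        linarith [hKle ω h t ht r hrS hr2.le]
      rw [integral_sub (hDint r) (hDint t)] at h2
      have h3 := (abs_lt.mp h1).2
      simp only [he] at h3
      linarith
    rw [integral_eq_zero_iff_of_nonneg_ae hnn hKint] at hz
    filter_upwards [hz] with ω h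
    simp only [Pi.zero_apply] at h
    linarith
  refine ⟨K, hKm, ?_, ?_, ?_⟩
  · filter_upwards [hmonoS, hD0] with ω hω h0
    refine ⟨by rw [hKS ω hω 0 h0S, h0], ?_⟩
    intro s hs t ht hst
    have := hne s hs
    have : K s ω = ⨅ x : {x : ℝ // x ∈ S ∧ x ≤ s}, D x.1 ω := by
      simp only [K]; rw [if_pos hs]
    simp only
    rw [this]
    exact le_ciInf fun x => hKle ω hω t ht x.1 x.2.1 (x.2.2.trans hst)
  · intro t ht
    filter_upwards [hKD t ht] with ω h
    rw [h]; simp only [hD]; ring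
  · intro s hs t ht hst
    have hm : StronglyMeasurable[ℱ s] (fun ω => v s (X s ω) - I s ω) :=
      (((hvm s).comp (hXm s)).sub (hIadapted s)).stronglyMeasurable
    have h1 : ℙ[fun ω => v s (X s ω) - I s ω | ℱ s] = fun ω => v s (X s ω) - I s ω :=
      condExp_of_stronglyMeasurable (ℱ.le s) hm ((hvint s).sub (hIint s))
    rw [← h1]
    refine condExp_mono ((hvint t).sub (hIint t)) ((hvint s).sub (hIint s)) ?_
    filter_upwards [hinc s t hs.1 hst ht.2] with ω h
    linarith
end
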